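/- Every n×n real polynomial matrix b(z) = b₀ + b₁z + ⋯ + b_q z^q with det b(z) ≠ 0 for all complex z with |z| = 1 admits a Wiener–Hopf factorisation: there exist an n×n real polynomial matrix p(z) with det p(z) ≠ 0 for all complex |z| ≤ 1, integers κ₁ ≥ ⋯ ≥ κₙ, and an n×n real polynomial matrix F(w) with det F(w) ≠ 0 for all complex |w| ≤ 1, such that b(z) = p(z) · diag(z^{κ₁},…,z^{κₙ}) · F(1/z) holds as an identity of matrices over the field of real rational functions. -/

import Mathlib

open Polynomial Matrix

/-- Evaluation of a real polynomial matrix at a complex point (entrywise). -/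
noncomputable def evalMat {n : ℕ} (M : Matrix (Fin n) (Fin n) (Polynomial ℝ)) (z : ℂ) :
    Matrix (Fin n) (Fin n) ℂ :=
  M.map (fun r => Polynomial.aeval z r)

/-- A polynomial matrix viewed as a matrix over the field of real rational functions. -/
noncomputable def polyToRat {n : ℕ} (M : Matrix (Fin n) (Fin n) (Polynomial ℝ)) :
    Matrix (Fin n) (Fin n) (RatFunc ℝ) :=
  M.map (algebraMap (Polynomial ℝ) (RatFunc ℝ))

/-- The rational matrix F(1/z) obtained from a polynomial matrix F by substituting 1/z. -/
noncomputable def invSub {n : ℕ} (F : Matrix (Fin n) (Fin n) (Polynomial ℝ)) :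
    Matrix (Fin n) (Fin n) (RatFunc ℝ) :=
  F.map (fun r => Polynomial.aeval ((RatFunc.X : RatFunc ℝ)⁻¹) r)

/-- The diagonal matrix diag(z^{κ₁},…,z^{κₙ}) over ℝ(z). -/
noncomputable def sMat (n : ℕ) (κ : Fin n → ℤ) : Matrix (Fin n) (Fin n) (RatFunc ℝ) :=
  Matrix.diagonal (fun i => (RatFunc.X : RatFunc ℝ) ^ (κ i))

/-- `IsWHF b p F κ` : b(z) = p(z) · diag(z^{κᵢ}) · F(1/z) is a Wiener–Hopf factorisation. -/
structure IsWHF {n : ℕ} (b p F : Matrix (Fin n) (Fin n) (Polynomial ℝ))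
    (κ : Fin n → ℤ) : Prop where
  p_noZero : ∀ z : ℂ, ‖z‖ ≤ 1 → (evalMat p z).det ≠ 0
  F_noZero : ∀ w : ℂ, ‖w‖ ≤ 1 → (evalMat F w).det ≠ 0
  anti : ∀ i j : Fin n, i ≤ j → κ j ≤ κ i
  eq : polyToRat b = polyToRat p * sMat n κ * invSub F

/-- Partial indices of type (κ,k): the first k indices equal κ+1, the rest κ. -/
def idx (n : ℕ) (κ k : ℕ) : Fin n → ℤ := fun i => if (i : ℕ) < k then (κ : ℤ) + 1 else (κ : ℤ)


/-- Degree of row `i` of a polynomial matrix. -/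
noncomputable def rowDeg {n : ℕ} (m : Matrix (Fin n) (Fin n) (Polynomial ℝ)) (i : Fin n) : ℕ :=
  Finset.univ.sup (fun j => (m i j).natDegree)

lemma natDegree_le_rowDeg {n : ℕ} (m : Matrix (Fin n) (Fin n) (Polynomial ℝ)) (i j : Fin n) :
    (m i j).natDegree ≤ rowDeg m i :=
  Finset.le_sup (f := fun j => (m i j).natDegree) (Finset.mem_univ j)

lemma evalMat_det {n : ℕ} (M : Matrix (Fin n) (Fin n) (Polynomial ℝ)) (z : ℂ) :
    (evalMat M z).det = aeval z M.det :=
  ((aeval z : ℝ[X] →ₐ[ℝ] ℂ).map_det M).symm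

lemma exists_max_support {n : ℕ} {R : Type*} [Zero R] (v : Fin n → R) (hv : v ≠ 0)
    (d : Fin n → ℕ) : ∃ i, v i ≠ 0 ∧ ∀ j, v j ≠ 0 → d j ≤ d i := by
  classical
  obtain ⟨i0, hi0⟩ := Function.ne_iff.mp hv
  obtain ⟨i, hi, hmax⟩ := Finset.exists_max_image (Finset.univ.filter fun j => v j ≠ 0) d
    ⟨i0, by simpa using hi0⟩
  exact ⟨i, by simpa using hi, fun j hj => hmax j (by simpa using hj)⟩

/-- Basic row operation. -/
lemma row_op {n : ℕ} (m : Matrix (Fin n) (Fin n) (Polynomial ℝ)) (v : Fin n → ℝ[X]) (i : Fin n)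
    (hvi : v i = 1) (g : ℝ[X]) (r : Fin n → ℝ[X]) (hr : g • r = v ᵥ* m) :
    ∃ Q : Matrix (Fin n) (Fin n) (Polynomial ℝ), Q.det = g ∧ m = Q * m.updateRow i r := by
  classical
  refine ⟨(1 : Matrix (Fin n) (Fin n) ℝ[X]).updateRow i (Function.update (-v) i g), ?_, ?_⟩
  · have h := Matrix.det_updateRow_sum (1 : Matrix (Fin n) (Fin n) ℝ[X]) i
      (Function.update (-v) i g)
    have h2 : (∑ k, (Function.update (-v) i g) k • (1 : Matrix (Fin n) (Fin n) ℝ[X]) k)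
        = Function.update (-v) i g := by
      ext1 k
      simp [Finset.sum_apply, Matrix.one_apply]
    rw [h2] at h
    simpa using h
  · ext1 a k
    by_cases ha : a = i
    · subst ha
      have hk := congrFun hr k
      simp only [Pi.smul_apply, smul_eq_mul, Matrix.vecMul, dotProduct] at hk
      rw [Matrix.mul_apply]
      rw [← Finset.add_sum_erase _ _ (Finset.mem_univ a)] at hk ⊢
      rw [hvi, one_mul] at hk
      simp only [updateRow_self, Function.update_self, hk]
      rw [add_assoc, ← Finset.sum_add_distrib, Finset.sum_eq_zero, add_zero]
      intro j hj
      have hj' : j ≠ a := Finset.ne_of_mem_erase hj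
      simp [hj']
    · rw [Matrix.mul_apply, Finset.sum_eq_single a]
      · simp [ha]
      · intro j _ hj
        simp [updateRow_ne ha, Matrix.one_apply_ne hj.symm]
      · simp

/-- Reduction step: singular leading row coefficient matrix. -/
lemma red_lead {n : ℕ} (m : Matrix (Fin n) (Fin n) (Polynomial ℝ))
    (h : (Matrix.of fun i j => (m i j).coeff (rowDeg m i)).det = 0) :
    ∃ (v : Fin n → ℝ[X]) (i : Fin n) (r : Fin n → ℝ[X]), v i = 1 ∧
      (1 : ℝ[X]) • r = v ᵥ* m ∧ ∀ k, (r k).degree < rowDeg m i := by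
  obtain ⟨c, hc, hcm⟩ := Matrix.exists_vecMul_eq_zero_iff.mpr h
  obtain ⟨i, hi, hmax⟩ := exists_max_support c hc (rowDeg m)
  refine ⟨fun j => C ((c i)⁻¹ * c j) * X ^ (rowDeg m i - rowDeg m j), i, _, by simp [hi],
    one_smul _ _, fun k => ?_⟩
  rw [degree_lt_iff_coeff_zero]
  intro N hN
  have hk := congrFun hcm k
  simp only [Matrix.vecMul, dotProduct, Matrix.of_apply, Pi.zero_apply] at hk
  simp only [Matrix.vecMul, dotProduct, finsetSum_coeff]
  have key : ∀ j, (C ((c i)⁻¹ * c j) * X ^ (rowDeg m i - rowDeg m j) * m j k).coeff N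
      = if N = rowDeg m i then (c i)⁻¹ * (c j * (m j k).coeff (rowDeg m j)) else 0 := by
    intro j
    by_cases hj : c j = 0
    · simp [hj]
    have hle := hmax j hj
    rw [mul_assoc, coeff_C_mul, coeff_X_pow_mul', if_pos (by omega)]
    split_ifs with hN'
    · rw [show N - (rowDeg m i - rowDeg m j) = rowDeg m j by omega]; ring
    · rw [coeff_eq_zero_of_natDegree_lt, mul_zero]
      have := natDegree_le_rowDeg m j k
      omega
  rw [Finset.sum_congr rfl fun j _ => key j]
  split_ifs
  · rw [← Finset.mul_sum, hk, mul_zero]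
  · simp

/-- Reduction step: determinantal zero outside of the disc. -/
lemma red_zero {n : ℕ} (m : Matrix (Fin n) (Fin n) (Polynomial ℝ)) (g : ℝ[X]) (hg : g.Monic)
    (hirr : Irreducible g) (h : g ∣ m.det) :
    ∃ (v : Fin n → ℝ[X]) (i : Fin n) (r : Fin n → ℝ[X]), v i = 1 ∧
      g • r = v ᵥ* m ∧ ∀ k, (r k).degree < rowDeg m i := by
  have : Fact (Irreducible g) := ⟨hirr⟩
  have hdet : ((AdjoinRoot.mk g).mapMatrix m).det = 0 := by
    rw [← RingHom.map_det, AdjoinRoot.mk_eq_zero]; exact h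
  obtain ⟨c, hc, hcm⟩ := Matrix.exists_vecMul_eq_zero_iff.mpr hdet
  obtain ⟨i, hi, hmax⟩ := exists_max_support c hc (rowDeg m)
  let v : Fin n → ℝ[X] := fun j => AdjoinRoot.modByMonicHom hg ((c i)⁻¹ * c j)
  have hmk : ∀ j, AdjoinRoot.mk g (v j) = (c i)⁻¹ * c j := fun j =>
    AdjoinRoot.mk_leftInverse hg _
  have hdeg : ∀ j, (v j).degree < g.degree := by
    intro j
    obtain ⟨f, hf⟩ := AdjoinRoot.mk_surjective ((c i)⁻¹ * c j)
    simp only [v, ← hf, AdjoinRoot.modByMonicHom_mk]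
    exact degree_modByMonic_lt _ hg
  have hvi : v i = 1 := by
    have h1 : AdjoinRoot.mk g 1 = (c i)⁻¹ * c i := by simp [hi]
    simp only [v, ← h1, AdjoinRoot.modByMonicHom_mk]
    rw [modByMonic_eq_self_iff hg, degree_one]
    exact degree_pos_of_irreducible hirr
  have hv0 : ∀ j, c j = 0 → v j = 0 := by
    intro j hj; simp [v, hj]
  have hdvd : ∀ k, g ∣ (v ᵥ* m) k := by
    intro k
    rw [← AdjoinRoot.mk_eq_zero]
    have hk := congrFun hcm k
    simp only [Matrix.vecMul, dotProduct, Pi.zero_apply, RingHom.mapMatrix_apply,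
      Matrix.map_apply] at hk ⊢
    simp only [map_sum, map_mul, hmk, mul_assoc]
    rw [← Finset.mul_sum, hk, mul_zero]
  choose r hr using hdvd
  refine ⟨v, i, r, hvi, ?_, ?_⟩
  · ext1 k; simp [hr k]
  · intro k
    by_cases hrk : r k = 0
    · simp [hrk]
    have h1 : (g * r k).degree < ((g.natDegree + rowDeg m i : ℕ) : WithBot ℕ) := by
      rw [← hr k, ← mem_degreeLT]
      simp only [Matrix.vecMul, dotProduct]
      refine Submodule.sum_mem _ fun j _ => ?_
      rw [mem_degreeLT]
      by_cases hz : v j * m j k = 0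
      · simp [hz]
      have hvj : v j ≠ 0 := left_ne_zero_of_mul hz
      have hmj := right_ne_zero_of_mul hz
      have hcj : c j ≠ 0 := fun h => hvj (hv0 j h)
      have := hmax j hcj
      have h2 := natDegree_le_rowDeg m j k
      have h3 := natDegree_lt_natDegree hvj (hdeg j)
      rw [degree_eq_natDegree hz, natDegree_mul hvj hmj, Nat.cast_lt]
      omega
    rw [degree_eq_natDegree (mul_ne_zero hg.ne_zero hrk), natDegree_mul hg.ne_zero hrk,
      Nat.cast_lt] at h1
    rw [degree_eq_natDegree hrk, Nat.cast_lt]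
    omega

/-- Factorisation without ordering of the indices. -/
def PreWHF {n : ℕ} (b : Matrix (Fin n) (Fin n) (Polynomial ℝ)) : Prop :=
  ∃ (p F : Matrix (Fin n) (Fin n) (Polynomial ℝ)) (κ : Fin n → ℤ),
    (∀ z : ℂ, ‖z‖ ≤ 1 → (evalMat p z).det ≠ 0) ∧ (∀ w : ℂ, ‖w‖ ≤ 1 → (evalMat F w).det ≠ 0) ∧
    polyToRat b = polyToRat p * sMat n κ * invSub F

lemma polyToRat_mul {n : ℕ} (A B : Matrix (Fin n) (Fin n) (Polynomial ℝ)) :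
    polyToRat (A * B) = polyToRat A * polyToRat B :=
  Matrix.map_mul

/-- A row-reduced matrix without zeros outside the open disc. -/
lemma base_case {n : ℕ} (m : Matrix (Fin n) (Fin n) (Polynomial ℝ))
    (hlead : (Matrix.of fun i j => (m i j).coeff (rowDeg m i)).det ≠ 0)
    (hz : ∀ z : ℂ, 1 ≤ ‖z‖ → aeval z m.det ≠ 0) : PreWHF m := by
  refine ⟨1, Matrix.of fun i j => reflect (rowDeg m i) (m i j), fun i => rowDeg m i, ?_, ?_, ?_⟩
  · intro z _; simp [evalMat_det]
  · intro w hw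
    by_cases hw0 : w = 0
    · subst hw0
      have : evalMat (Matrix.of fun i j => reflect (rowDeg m i) (m i j)) 0
          = (algebraMap ℝ ℂ).mapMatrix (Matrix.of fun i j => (m i j).coeff (rowDeg m i)) := by
        ext i j
        simp [evalMat, aeval_def, eval₂_at_zero, coeff_reflect, revAt_le]
      rw [this, ← RingHom.map_det]
      simpa using hlead
    · have h1 : 1 ≤ ‖w⁻¹‖ := by
        rw [norm_inv]; exact (one_le_inv₀ (norm_pos_iff.mpr hw0)).mpr hw
      have h2 := hz _ h1
      rw [← evalMat_det] at h2
      intro h3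
      apply h2
      have : evalMat m w⁻¹ = Matrix.diagonal (fun i => w⁻¹ ^ (rowDeg m i)) *
          evalMat (Matrix.of fun i j => reflect (rowDeg m i) (m i j)) w := by
        ext i j
        let : Invertible (w⁻¹) := invertibleOfNonzero (inv_ne_zero hw0)
        have := eval₂_reflect_mul_pow (algebraMap ℝ ℂ) w⁻¹ (rowDeg m i) (m i j)
          (natDegree_le_rowDeg m i j)
        simp only [invOf_eq_inv, inv_inv] at this
        simp [evalMat, Matrix.diagonal_mul, aeval_def, ← this, mul_comm]
      rw [this, det_mul, h3, mul_zero]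
  · have h1 : polyToRat (1 : Matrix (Fin n) (Fin n) ℝ[X]) = 1 := by
      simp [polyToRat]
    rw [h1, one_mul]
    ext1 i j
    let : Invertible (RatFunc.X : RatFunc ℝ) := invertibleOfNonzero RatFunc.X_ne_zero
    have := eval₂_reflect_mul_pow (algebraMap ℝ (RatFunc ℝ)) RatFunc.X (rowDeg m i) (m i j)
          (natDegree_le_rowDeg m i j)
    simp only [invOf_eq_inv] at this
    simp only [polyToRat, sMat, invSub, Matrix.diagonal_mul, Matrix.map_apply, Matrix.of_apply,
      aeval_def, zpow_natCast]
    rw [mul_comm, this, ← aeval_def, RatFunc.aeval_X_left_eq_algebraMap]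

lemma pre_exists {n : ℕ} (N : ℕ) : ∀ m : Matrix (Fin n) (Fin n) (Polynomial ℝ),
    ∑ i, rowDeg m i = N → m.det ≠ 0 → (∀ z : ℂ, ‖z‖ = 1 → aeval z m.det ≠ 0) → PreWHF m := by
  classical
  induction N using Nat.strong_induction_on with
  | _ N ih =>
  intro m hN hdet hcirc
  have step : ∀ (g : ℝ[X]) (v : Fin n → ℝ[X]) (i : Fin n) (r : Fin n → ℝ[X]),
      (∀ z : ℂ, ‖z‖ ≤ 1 → aeval z g ≠ 0) → v i = 1 →
      g • r = v ᵥ* m → (∀ k, (r k).degree < rowDeg m i) → PreWHF m := by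
    intro g v i r hg hvi hr hdeg
    obtain ⟨Q, hQ, hm⟩ := row_op m v i hvi g r hr
    set m' := m.updateRow i r with hm'
    have hd : m.det = g * m'.det := by rw [← hQ, ← det_mul, ← hm]
    have hdet' : m'.det ≠ 0 := right_ne_zero_of_mul (hd ▸ hdet)
    have hpos : 0 < rowDeg m i := by
      by_contra h0
      apply hdet'
      apply det_eq_zero_of_row_eq_zero i
      intro k
      have := hdeg k
      rw [show rowDeg m i = 0 by omega] at this
      simpa [hm', Nat.WithBot.lt_zero_iff] using this
    have hlt : rowDeg m' i < rowDeg m i := by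
      unfold rowDeg
      rw [Finset.sup_lt_iff (by simpa [rowDeg] using hpos)]
      intro k _
      simp only [hm', updateRow_self]
      have := hdeg k
      by_cases hrk : r k = 0
      · rw [hrk, natDegree_zero]; exact hpos
      · rw [degree_eq_natDegree hrk, Nat.cast_lt] at this
        exact this
    have hsum : ∑ j, rowDeg m' j < N := by
      rw [← hN]
      refine Finset.sum_lt_sum (fun j _ => ?_) ⟨i, Finset.mem_univ _, hlt⟩
      by_cases hj : j = i
      · subst hj; exact hlt.le
      · simp [rowDeg, hm', updateRow_ne hj]
    obtain ⟨p, F, κ, hp, hF, he⟩ := ih _ hsum m' rfl hdet' (fun z hz h => hcirc z hz (by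
      rw [hd, map_mul, h, mul_zero]))
    refine ⟨Q * p, F, κ, fun z hz => ?_, hF, ?_⟩
    · rw [evalMat_det, det_mul, map_mul, hQ]
      exact mul_ne_zero (hg z hz) (by rw [← evalMat_det]; exact hp z hz)
    · rw [polyToRat_mul, Matrix.mul_assoc, Matrix.mul_assoc, ← Matrix.mul_assoc (polyToRat p), ← he,
        ← polyToRat_mul, ← hm]
  by_cases hlead : (Matrix.of fun i j => (m i j).coeff (rowDeg m i)).det = 0
  · obtain ⟨v, i, r, h1, h2, h3⟩ := red_lead m hlead
    exact step 1 v i r (by simp) h1 h2 h3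
  by_cases hz : ∀ z : ℂ, 1 ≤ ‖z‖ → aeval z m.det ≠ 0
  · exact base_case m hlead hz
  push Not at hz
  obtain ⟨z, hz1, hz0⟩ := hz
  have hint : IsIntegral ℝ z := Algebra.IsIntegral.isIntegral z
  obtain ⟨v, i, r, h1, h2, h3⟩ := red_zero m (minpoly ℝ z) (minpoly.monic hint)
    (minpoly.irreducible hint) (minpoly.dvd ℝ z hz0)
  refine step _ v i r (fun w hw hw0 => ?_) h1 h2 h3
  -- `w` is a conjugate of `z`
  have hdvd : minpoly ℝ z ∣ (X ^ 2 - C (2 * z.re) * X + C (z.re ^ 2 + z.im ^ 2)) := by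
    apply minpoly.dvd
    apply Complex.ext <;> simp [pow_two] <;> ring
  obtain ⟨q, hq⟩ := hdvd
  have hw2 : aeval w (X ^ 2 - C (2 * z.re) * X + C (z.re ^ 2 + z.im ^ 2)) = 0 := by
    rw [hq, map_mul, hw0, zero_mul]
  have hw3 : (w - z) * (w - (starRingEnd ℂ) z) = 0 := by
    rw [← hw2]
    apply Complex.ext <;> simp [pow_two] <;> ring
  have hnorm : ‖w‖ = ‖z‖ := by
    rcases mul_eq_zero.mp hw3 with h | h
    · rw [sub_eq_zero.mp h]
    · rw [sub_eq_zero.mp h, Complex.norm_conj]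
  exact hcirc z (by linarith) hz0

/-- every real polynomial matrix with no determinantal zeros on the unit
circle admits a Wiener–Hopf factorisation. -/
theorem stmt7 {n : ℕ} (b : Matrix (Fin n) (Fin n) (Polynomial ℝ))
    (hcirc : ∀ z : ℂ, ‖z‖ = 1 → (evalMat b z).det ≠ 0) :
    ∃ (p F : Matrix (Fin n) (Fin n) (Polynomial ℝ)) (κ : Fin n → ℤ),
      IsWHF b p F κ := by
  have h0 : b.det ≠ 0 := by
    intro h
    apply hcirc 1 (by simp)
    rw [evalMat_det, h, map_zero]
  obtain ⟨p, F, κ, hp, hF, he⟩ := pre_exists _ b rfl h0 (fun z hz => by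
    rw [← evalMat_det]; exact hcirc z hz)
  let σ : Equiv.Perm (Fin n) := Tuple.sort (fun i => -κ i)
  have hσ : Monotone ((fun i => -κ i) ∘ σ) := Tuple.monotone_sort _
  refine ⟨p.submatrix id σ, F.submatrix σ id, κ ∘ σ, ?_, ?_, ?_, ?_⟩
  · intro z hz
    rw [evalMat_det, det_permute', map_mul, ← evalMat_det]
    refine mul_ne_zero ?_ (hp z hz)
    rcases Int.units_eq_one_or (Equiv.Perm.sign σ) with h | h <;> simp [h]
  · intro z hz
    rw [evalMat_det, det_permute, map_mul, ← evalMat_det]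
    refine mul_ne_zero ?_ (hF z hz)
    rcases Int.units_eq_one_or (Equiv.Perm.sign σ) with h | h <;> simp [h]
  · intro i j hij
    have := hσ hij
    simpa using this
  · have e1 : polyToRat (p.submatrix id σ) = (polyToRat p).submatrix id σ := rfl
    have e2 : invSub (F.submatrix σ id) = (invSub F).submatrix σ id := rfl
    have e3 : sMat n (κ ∘ σ) = (sMat n κ).submatrix σ σ := by
      rw [sMat, sMat, submatrix_diagonal_equiv]; rfl
    rw [e1, e2, e3, submatrix_mul_equiv, submatrix_mul_equiv, submatrix_id_id, he]
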